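/- arXiv:2003.02819 — 3 statements merged into one kernel-verified Lean document; each statement's English description precedes it below -/
import Mathlib

section
/- Let L ≥ 1, let T ∈ ℝ^{L×L} be an invertible matrix, let p ∈ ℝ^L, and let the noisy class-probability vector be p̄ = Tᵀ p. Then for every loss vector ℓ ∈ ℝ^L, the backward-corrected expected loss equals the clean expected loss: Σ_{ȳ=1}^L p̄_{ȳ} · (T^{-1} ℓ)_{ȳ} = Σ_{y=1}^L p_y · ℓ_y. In particular, (Tᵀ)^{-1} p̄ = p, so backward correction exactly recovers the clean class-probabilities. -/
open Matrix

section RightInverse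

variable {m n R : Type*} [Fintype m] [Fintype n] [DecidableEq m] [CommSemiring R]
  {T : Matrix m n R} {S : Matrix n m R}

theorem transpose_mulVec_transpose_mulVec_of_mul_eq_one (hTS : T * S = 1) (p : m → R) :
    Sᵀ *ᵥ (Tᵀ *ᵥ p) = p := by
  rw [mulVec_mulVec, ← transpose_mul, hTS, transpose_one, one_mulVec]

theorem transpose_mulVec_dotProduct_mulVec_of_mul_eq_one (hTS : T * S = 1) (p ℓ : m → R) :
    (Tᵀ *ᵥ p) ⬝ᵥ (S *ᵥ ℓ) = p ⬝ᵥ ℓ :=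
  calc (Tᵀ *ᵥ p) ⬝ᵥ (S *ᵥ ℓ)
      = (Sᵀ *ᵥ (Tᵀ *ᵥ p)) ⬝ᵥ ℓ := by rw [dotProduct_mulVec, ← mulVec_transpose]
    _ = p ⬝ᵥ ℓ := by rw [transpose_mulVec_transpose_mulVec_of_mul_eq_one hTS]

theorem stmt5_general (hTS : T * S = 1) {p : m → R} {pbar : n → R} (hpbar : pbar = Tᵀ *ᵥ p) :
    (∀ ℓ : m → R, pbar ⬝ᵥ (S *ᵥ ℓ) = p ⬝ᵥ ℓ) ∧ Sᵀ *ᵥ pbar = p := by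
  subst hpbar
  exact ⟨transpose_mulVec_dotProduct_mulVec_of_mul_eq_one hTS p,
    transpose_mulVec_transpose_mulVec_of_mul_eq_one hTS p⟩

end RightInverse

/-- For an invertible transition matrix `T`, clean class-probabilities `p`
and noisy class-probabilities `p̄ = Tᵀ p`, the backward-corrected expected loss equals
the clean expected loss for every loss vector `ℓ`; in particular `(Tᵀ)⁻¹ p̄ = p`. -/
theorem stmt5 (L : ℕ) (hL : 1 ≤ L) (T : Matrix (Fin L) (Fin L) ℝ)
    (hT : IsUnit T.det) (p pbar : Fin L → ℝ) (hpbar : pbar = T.transpose.mulVec p) :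
    (∀ ℓ : Fin L → ℝ, pbar ⬝ᵥ (T⁻¹.mulVec ℓ) = p ⬝ᵥ ℓ) ∧
    (T.transpose)⁻¹.mulVec pbar = p := by
  rw [← transpose_nonsing_inv]
  exact stmt5_general (T.mul_nonsing_inv hT) hpbar
end

section
/- Let L ≥ 2, α ∈ (0,1), and y ∈ {1,…,L}. The backward-corrected softmax cross-entropy for symmetric noise, ℓ^←(y,f) = (1/(1−α))·[ ℓ(y,f) − (α/L)·Σ_{y'=1}^L ℓ(y',f) ] with ℓ(y,f) = −f_y + log Σ_{y'} exp(f_{y'}), is unbounded below: along f = t·e_y with t → ∞, ℓ^←(y, t·e_y) → −∞. In particular backward correction assigns arbitrarily negative loss to sufficiently confident correct predictions. -/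
/-!
For any loss, the correction adds to `ℓ y` a negative multiple of the average gap `ℓ y' - ℓ y`.
For the softmax cross-entropy the normalizer cancels in these gaps, leaving the logit margins
`f y - f y'`. Along a nonconstant ray on which the logit of `y` is largest, the uncorrected loss
stays at most `log |ι|` while the average margin grows linearly.
-/

section BackwardCorrection

open Filter Finset
open scoped BigOperators

variable {ι : Type*} [Fintype ι]

/-- The backward correction of a loss `ℓ` for symmetric label noise at level `α`: the row of index
`y` of `(1 / (1 - α)) • (1 - (α / |ι|) • J)`, the inverse of the noise matrix
`(1 - α) • 1 + (α / |ι|) • J` with `J` the all-ones matrix, applied to the vector of losses of all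
labels. -/
noncomputable def backwardCorrection {E : Type*} (α : ℝ) (ℓ : ι → E → ℝ) (y : ι) (x : E) : ℝ :=
  1 / (1 - α) * (ℓ y x - α / Fintype.card ι * ∑ y', ℓ y' x)

/-- The cross-entropy loss of the softmax of the logits `f` when the label is `y`. -/
noncomputable def softmaxCrossEntropy (y : ι) (f : ι → ℝ) : ℝ :=
  -f y + Real.log (∑ j, Real.exp (f j))

theorem backwardCorrection_eq_sub_expect {E : Type*} {α : ℝ} (hα : α ≠ 1) (ℓ : ι → E → ℝ) (y : ι)
    (x : E) :
    backwardCorrection α ℓ y x = ℓ y x - α / (1 - α) * 𝔼 y', (ℓ y' x - ℓ y x) := by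
  have : Nonempty ι := ⟨y⟩
  have hα' : 1 - α ≠ 0 := sub_ne_zero.mpr hα.symm
  rw [expect_sub_distrib, Fintype.expect_const, Fintype.expect_eq_sum_div_card, backwardCorrection]
  field

theorem tendsto_backwardCorrection_atBot {E β : Type*} {α : ℝ} (hα0 : 0 < α) (hα1 : α < 1)
    {ℓ : ι → E → ℝ} {y : ι} {l : Filter β} {u : β → E} {C : ℝ} (hC : ∀ᶠ b in l, ℓ y (u b) ≤ C)
    (hgap : Tendsto (fun b => 𝔼 y', (ℓ y' (u b) - ℓ y (u b))) l atTop) :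
    Tendsto (fun b => backwardCorrection α ℓ y (u b)) l atBot := by
  have hcoeff : 0 < α / (1 - α) := div_pos hα0 (sub_pos.mpr hα1)
  simp only [backwardCorrection_eq_sub_expect hα1.ne, sub_eq_add_neg (ℓ y _)]
  exact tendsto_atBot_add_left_of_ge' l C hC
    (tendsto_neg_atTop_atBot.comp (hgap.const_mul_atTop hcoeff))

theorem softmaxCrossEntropy_sub_softmaxCrossEntropy (y' y : ι) (f : ι → ℝ) :
    softmaxCrossEntropy y' f - softmaxCrossEntropy y f = f y - f y' := by
  simp only [softmaxCrossEntropy]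
  ring

theorem softmaxCrossEntropy_le_log_card {y : ι} {f : ι → ℝ} (hf : ∀ j, f j ≤ f y) :
    softmaxCrossEntropy y f ≤ Real.log (Fintype.card ι) := by
  have : Nonempty ι := ⟨y⟩
  have hsum_pos : 0 < ∑ j, Real.exp (f j) := sum_pos (fun j _ => Real.exp_pos _) univ_nonempty
  have hsum_le : ∑ j, Real.exp (f j) ≤ Fintype.card ι * Real.exp (f y) := by
    simpa using sum_le_card_nsmul univ _ _ fun j _ => Real.exp_le_exp.mpr (hf j)
  calc
    softmaxCrossEntropy y f ≤ -f y + Real.log (Fintype.card ι * Real.exp (f y)) :=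
      add_le_add_right (Real.log_le_log hsum_pos hsum_le) _
    _ = Real.log (Fintype.card ι) := by
      rw [Real.log_mul (by simp) (Real.exp_ne_zero _), Real.log_exp]
      ring

theorem tendsto_expect_smul_sub_atTop {y : ι} {v : ι → ℝ} (hle : ∀ j, v j ≤ v y)
    (hlt : ∃ j, v j < v y) : Tendsto (fun t : ℝ => 𝔼 j, ((t • v) y - (t • v) j)) atTop atTop := by
  have hpos : 0 < 𝔼 j, (v y - v j) :=
    expect_pos' (fun j _ => sub_nonneg.mpr (hle j))
      (hlt.imp fun j hj => ⟨mem_univ j, sub_pos.mpr hj⟩)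
  simp only [Pi.smul_apply, smul_eq_mul, ← mul_sub, ← mul_expect]
  exact tendsto_id.atTop_mul_const hpos

theorem stmt15_general {α : ℝ} (hα0 : 0 < α) (hα1 : α < 1) {y : ι} {v : ι → ℝ}
    (hle : ∀ j, v j ≤ v y) (hlt : ∃ j, v j < v y) :
    ¬ BddBelow (Set.range (backwardCorrection α softmaxCrossEntropy y)) ∧
    Tendsto (fun t : ℝ => backwardCorrection α softmaxCrossEntropy y (t • v)) atTop atBot := by
  have hbound : ∀ᶠ t : ℝ in atTop, softmaxCrossEntropy y (t • v) ≤ Real.log (Fintype.card ι) := by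
    filter_upwards [eventually_ge_atTop 0] with t ht
    exact softmaxCrossEntropy_le_log_card fun j => mul_le_mul_of_nonneg_left (hle j) ht
  have hlim : Tendsto (fun t : ℝ => backwardCorrection α softmaxCrossEntropy y (t • v))
      atTop atBot := by
    refine tendsto_backwardCorrection_atBot hα0 hα1 hbound ?_
    simpa only [softmaxCrossEntropy_sub_softmaxCrossEntropy] using
      tendsto_expect_smul_sub_atTop hle hlt
  refine ⟨fun hbdd => not_bddBelow_of_tendsto_atBot hlim (hbdd.mono ?_), hlim⟩
  exact Set.range_comp_subset_range (fun t : ℝ => t • v) (backwardCorrection α _ y)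

end BackwardCorrection

/-- For `L ≥ 2` and `α ∈ (0,1)`, the backward-corrected softmax
cross-entropy for symmetric noise, `ℓ^←(y,f) = (1/(1−α))·[ℓ(y,f) − (α/L)·Σ_{y'} ℓ(y',f)]`,
is unbounded below: along `f = t·e_y` with `t → ∞` it tends to `−∞`. -/
theorem stmt15 (L : ℕ) (hL : 2 ≤ L) (α : ℝ) (hα0 : 0 < α) (hα1 : α < 1) (y : Fin L)
    (ℓ : Fin L → (Fin L → ℝ) → ℝ)
    (hℓ : ∀ y' f, ℓ y' f = -(f y') + Real.log (∑ j, Real.exp (f j)))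
    (ℓb : Fin L → (Fin L → ℝ) → ℝ)
    (hℓb : ∀ y' f, ℓb y' f = (1 / (1 - α)) * (ℓ y' f - (α / L) * ∑ y'', ℓ y'' f)) :
    ¬ BddBelow (Set.range (ℓb y)) ∧
    Filter.Tendsto (fun t : ℝ => ℓb y (t • (Pi.single y 1 : Fin L → ℝ)))
      Filter.atTop Filter.atBot := by
  obtain rfl : ℓ = softmaxCrossEntropy := funext₂ hℓ
  obtain rfl : ℓb = backwardCorrection α softmaxCrossEntropy := by
    ext y' f
    rw [hℓb, backwardCorrection, Fintype.card_fin]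
  have : Nontrivial (Fin L) := Fin.nontrivial_iff_two_le.mpr hL
  exact stmt15_general hα0 hα1 (fun j => by by_cases h : j = y <;> simp [h])
    ((exists_ne y).imp fun j hj => by simp [hj])
end

section
/- Let L ≥ 1, α ∈ (0,1], and T = (1−α)·I + (α/L)·J. Define the forward-corrected softmax cross-entropy by ℓ^→(y,f) = −log( (Tᵀ q)_y ), where q ∈ ℝ^L is the softmax of f, q_i = exp(f_i)/Σ_j exp(f_j). Then for every y ∈ {1,…,L} and every f ∈ ℝ^L, 0 ≤ ℓ^→(y,f) ≤ log(L/α); i.e., the forward-corrected loss is bounded (it saturates even for arbitrarily wrong confident predictions), because (Tᵀ q)_y = (1−α)·q_y + α/L ≥ α/L. -/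
open Matrix

section SymmetricNoise

variable {K ι : Type*} [Fintype ι] [DecidableEq ι]

section DivisionRing

variable [DivisionRing K]

/-- The symmetric-noise smearing matrix `T = (1 - α) • I + (α / L) • J` over an index type `ι` of
`L` labels: a label is kept with weight `1 - α` and resampled uniformly with weight `α`. -/
def symmetricNoise (ι : Type*) [Fintype ι] [DecidableEq ι] (α : K) : Matrix ι ι K :=
  (1 - α) • (1 : Matrix ι ι K) + (α / Fintype.card ι) • Matrix.of fun _ _ => (1 : K)

theorem isSymm_symmetricNoise (α : K) : (symmetricNoise ι α).IsSymm :=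
  (isSymm_one.smul _).add (IsSymm.smul (IsSymm.ext fun _ _ => rfl) _)

theorem symmetricNoise_mulVec_apply (α : K) (q : ι → K) (y : ι) :
    (symmetricNoise ι α *ᵥ q) y = (1 - α) * q y + α / Fintype.card ι * ∑ i, q i := by
  have all_ones : (Matrix.of fun _ _ : ι => (1 : K)) *ᵥ q = fun _ => ∑ i, q i :=
    funext fun _ => one_dotProduct q
  simp only [symmetricNoise, add_mulVec, smul_mulVec, one_mulVec, all_ones, Pi.add_apply,
    Pi.smul_apply, smul_eq_mul]

theorem symmetricNoise_mulVec_apply_of_sum_eq_one (α : K) {q : ι → K} (hq : ∑ i, q i = 1) (y : ι) :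
    (symmetricNoise ι α *ᵥ q) y = (1 - α) * q y + α / Fintype.card ι := by
  rw [symmetricNoise_mulVec_apply, hq, mul_one]

end DivisionRing

variable [Field K] [LinearOrder K] [IsStrictOrderedRing K] {α : K} {q : ι → K}

theorem symmetricNoise_mulVec_eq_add_smul_barycenter [Nonempty ι] (α : K)
    (hq : ∑ i, q i = 1) :
    symmetricNoise ι α *ᵥ q =
      (1 - α) • q + α • (stdSimplex.barycenter : stdSimplex K ι).val := by
  ext y
  rw [symmetricNoise_mulVec_apply_of_sum_eq_one α hq, div_eq_mul_inv]
  rfl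

theorem symmetricNoise_mulVec_mem_stdSimplex (hα0 : 0 ≤ α) (hα1 : α ≤ 1)
    (hq : q ∈ stdSimplex K ι) : symmetricNoise ι α *ᵥ q ∈ stdSimplex K ι := by
  cases isEmpty_or_nonempty ι
  · simp [stdSimplex_of_isEmpty_index] at hq
  · rw [symmetricNoise_mulVec_eq_add_smul_barycenter α hq.2]
    exact convex_stdSimplex K ι hq stdSimplex.barycenter.2 (sub_nonneg.2 hα1) hα0
      (sub_add_cancel 1 α)

theorem div_card_le_symmetricNoise_mulVec_apply (hα1 : α ≤ 1) (hq : q ∈ stdSimplex K ι) (y : ι) :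
    α / Fintype.card ι ≤ (symmetricNoise ι α *ᵥ q) y := by
  rw [symmetricNoise_mulVec_apply_of_sum_eq_one α hq.2]
  exact le_add_of_nonneg_left (mul_nonneg (sub_nonneg.2 hα1) (hq.1 y))

end SymmetricNoise

section Softmax

variable {ι : Type*} [Fintype ι]

/-- The softmax of a vector of logits, the vector of class probabilities predicted by a model. -/
noncomputable def softmax (f : ι → ℝ) (i : ι) : ℝ :=
  Real.exp (f i) / ∑ j, Real.exp (f j)

theorem softmax_mem_stdSimplex [Nonempty ι] (f : ι → ℝ) : softmax f ∈ stdSimplex ℝ ι := by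
  have sum_exp_pos : 0 < ∑ j, Real.exp (f j) :=
    Finset.sum_pos (fun j _ => Real.exp_pos (f j)) Finset.univ_nonempty
  refine ⟨fun i => div_nonneg (Real.exp_pos (f i)).le sum_exp_pos.le, ?_⟩
  simp only [softmax]
  rw [← Finset.sum_div, div_self sum_exp_pos.ne']

end Softmax

theorem neg_log_mem_Icc {c p : ℝ} (hc : 0 < c) (hcp : c ≤ p) (hp : p ≤ 1) :
    -Real.log p ∈ Set.Icc 0 (Real.log c⁻¹) := by
  rw [Real.log_inv]
  exact ⟨neg_nonneg.2 (Real.log_nonpos (hc.le.trans hcp) hp),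
    neg_le_neg (Real.log_le_log hc hcp)⟩

theorem stmt16_general {ι : Type*} [Fintype ι] [DecidableEq ι] {α : ℝ} (hα0 : 0 < α) (hα1 : α ≤ 1)
    {q : ι → ℝ} (hq : q ∈ stdSimplex ℝ ι) (y : ι) :
    ((symmetricNoise ι α)ᵀ *ᵥ q) y = (1 - α) * q y + α / Fintype.card ι ∧
    α / Fintype.card ι ≤ ((symmetricNoise ι α)ᵀ *ᵥ q) y ∧
    0 ≤ -Real.log (((symmetricNoise ι α)ᵀ *ᵥ q) y) ∧
    -Real.log (((symmetricNoise ι α)ᵀ *ᵥ q) y) ≤ Real.log (Fintype.card ι / α) := by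
  have : Nonempty ι := ⟨y⟩
  have floor_pos : 0 < α / Fintype.card ι := div_pos hα0 (Nat.cast_pos.2 Fintype.card_pos)
  have floor_le := div_card_le_symmetricNoise_mulVec_apply hα1 hq y
  have le_one := (mem_Icc_of_mem_stdSimplex
    (symmetricNoise_mulVec_mem_stdSimplex hα0.le hα1 hq) y).2
  rw [isSymm_symmetricNoise α, ← inv_div α]
  exact ⟨symmetricNoise_mulVec_apply_of_sum_eq_one α hq.2 y, floor_le,
    neg_log_mem_Icc floor_pos floor_le le_one⟩

/-- For `α ∈ (0,1]`, `T = (1−α)·I + (α/L)·J`, and `q` the softmax of `f`,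
the forward-corrected loss `ℓ^→(y,f) = −log((Tᵀ q)_y)` satisfies
`0 ≤ ℓ^→(y,f) ≤ log(L/α)`, because `(Tᵀ q)_y = (1−α)·q_y + α/L ≥ α/L`. -/
theorem stmt16 (L : ℕ) (hL : 1 ≤ L) (α : ℝ) (hα0 : 0 < α) (hα1 : α ≤ 1)
    (T : Matrix (Fin L) (Fin L) ℝ)
    (hT : T = (1 - α) • (1 : Matrix (Fin L) (Fin L) ℝ) +
      (α / L) • Matrix.of (fun _ _ => (1 : ℝ)))
    (f : Fin L → ℝ) (q : Fin L → ℝ)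
    (hq : ∀ i, q i = Real.exp (f i) / ∑ j, Real.exp (f j)) (y : Fin L) :
    T.transpose.mulVec q y = (1 - α) * q y + α / L ∧
    α / L ≤ T.transpose.mulVec q y ∧
    0 ≤ -Real.log (T.transpose.mulVec q y) ∧
    -Real.log (T.transpose.mulVec q y) ≤ Real.log ((L : ℝ) / α) := by
  obtain rfl : q = softmax f := funext hq
  have : Nonempty (Fin L) := ⟨y⟩
  simpa only [hT, symmetricNoise, Fintype.card_fin] using
    stmt16_general hα0 hα1 (softmax_mem_stdSimplex f) y
end
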